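/- Let 1 ≤ v ≤ m, let B ⊆ ℒ^{mn} be a ball of radius ρ₀, let μ_{v-1} > 0, and let B'' ⊆ B be a ball such that ‖M_{v-1}(A)‖_∞ > ρ₀ μ_{v-1} M_{v-2}(B'') for every A ∈ B''. If B' ⊆ B'' is a ball of radius ρ(B') < (1/2) μ_{v-1} ρ(B''), then ‖M_{v-1}(A')‖_∞ > (1/2) M_{v-1}(B') for every A' ∈ B'. -/

import Mathlib

/-!
Common setup: the field `ℒ = 𝔽((X⁻¹))` of formal Laurent series with coefficients
in a finite field `𝔽` of `k` elements.  We realize `ℒ` as `LaurentSeries 𝔽`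
(Hahn series over `ℤ`) in the variable `T = X⁻¹`, so that `X` corresponds to `T⁻¹`
and the polynomial ring `𝔽[X]` corresponds to series supported on nonpositive
exponents.  The absolute value of `x = Σ_{i ≤ N} a_i X^i` (with `a_N ≠ 0`) is
`k^N`, i.e. `k^(-order x)` in terms of the `T`-adic order.
-/

open scoped Classical ENNReal NNReal
open MeasureTheory

noncomputable section

namespace FSBad

/-- The field `ℒ = 𝔽((X⁻¹))`. -/
abbrev L (𝔽 : Type) [Field 𝔽] : Type := LaurentSeries 𝔽

variable {𝔽 : Type} [Field 𝔽] [Fintype 𝔽]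

/-- The absolute value `‖·‖` on `ℒ`: `‖x‖ = k^(deg_X x)`, `‖0‖ = 0`. -/
def lnorm (x : L 𝔽) : ℝ := if x = 0 then 0 else (Fintype.card 𝔽 : ℝ) ^ (-x.order)

/-- Membership in the polynomial ring `𝔽[X] ⊆ ℒ` (polynomials in `X = T⁻¹`). -/
def IsPoly (x : L 𝔽) : Prop := ∀ i : ℤ, 0 < i → x.coeff i = 0

/-- The height (sup-norm) `‖·‖_∞` on `ℒ^ι`. -/
def vnorm {ι : Type*} (x : ι → L 𝔽) : ℝ := ⨆ i, lnorm (x i)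

/-- The closed ball in `ℒ^ι` with centre `c` and radius `ρ`. -/
def vball {ι : Type*} (c : ι → L 𝔽) (ρ : ℝ) : Set (ι → L 𝔽) :=
  {x | vnorm (fun i => x i - c i) ≤ ρ}

/-- `m × n` matrices over `ℒ`, identified with `ℒ^(mn)`. -/
abbrev Mat (𝔽 : Type) [Field 𝔽] (m n : ℕ) : Type := Matrix (Fin m) (Fin n) (L 𝔽)

/-- The height of a matrix, i.e. the sup-norm on `ℒ^(mn)`. -/
def mnorm {m n : ℕ} (A : Mat 𝔽 m n) : ℝ := ⨆ p : Fin m × Fin n, lnorm (A p.1 p.2)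

/-- The closed ball in `ℒ^(mn)` with centre `c` and radius `ρ`. -/
def mball {m n : ℕ} (c : Mat 𝔽 m n) (ρ : ℝ) : Set (Mat 𝔽 m n) :=
  {A | mnorm (A - c) ≤ ρ}

/-- The distance `⟨x⟩` from `x ∈ ℒ^h` to the polynomial lattice `𝔽[X]^h`. -/
def latDist {h : ℕ} (x : Fin h → L 𝔽) : ℝ :=
  sInf {r : ℝ | ∃ p : Fin h → L 𝔽, (∀ i, IsPoly (p i)) ∧ r = vnorm (fun i => x i - p i)}

/-- The set `𝔅(m,n)` of badly approximable systems of `m` linear forms in `n`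
variables over `ℒ`. -/
def Bad (𝔽 : Type) [Field 𝔽] [Fintype 𝔽] (m n : ℕ) : Set (Mat 𝔽 m n) :=
  {A | ∃ K : ℝ, 0 < K ∧ ∀ q : Fin m → L 𝔽, (∀ i, IsPoly (q i)) → q ≠ 0 →
    latDist (Matrix.vecMul q A) ^ n > K / vnorm q ^ m}

/-- The Hausdorff `s`-measure of `E ⊆ ℒ^(mn)`, defined through countable covers by
balls of radii `< δ`, letting `δ → 0` (the infimum over `δ`-covers is nonincreasing
in `δ`, so the limit is the supremum over `δ > 0`). -/
def hMeasure {m n : ℕ} (s : ℝ) (E : Set (Mat 𝔽 m n)) : ℝ≥0∞ :=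
  ⨆ (δ : ℝ) (_ : 0 < δ),
    ⨅ (c : ℕ → Mat 𝔽 m n) (ρ : ℕ → ℝ) (_ : ∀ i, 0 < ρ i ∧ ρ i < δ)
      (_ : E ⊆ ⋃ i, mball (c i) (ρ i)), ∑' i, ENNReal.ofReal (ρ i ^ s)

/-- The Hausdorff dimension of `E ⊆ ℒ^(mn)`. -/
def hdim {m n : ℕ} (E : Set (Mat 𝔽 m n)) : ℝ :=
  sInf {s : ℝ | 0 ≤ s ∧ hMeasure s E = 0}

/-! ### Schmidt `(α,β)`-games on `ℒ^(mn)` -/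

/-- A formal ball: an element of `Ω = ℒ^(mn) × ℝ`. -/
structure FBall (𝔽 : Type) [Field 𝔽] (m n : ℕ) where
  /-- centre -/
  c : Mat 𝔽 m n
  /-- radius -/
  r : ℝ

/-- Formal inclusion of formal balls: `(c₁,ρ₁) ⊆ (c₂,ρ₂)` iff `ρ₁ + ‖c₁ - c₂‖_∞ ≤ ρ₂`. -/
def FBall.ssub {m n : ℕ} (B₁ B₂ : FBall 𝔽 m n) : Prop :=
  B₁.r + mnorm (B₁.c - B₂.c) ≤ B₂.r

/-- The subset of `ℒ^(mn)` determined by a formal ball. -/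
def FBall.toSet {m n : ℕ} (B : FBall 𝔽 m n) : Set (Mat 𝔽 m n) := mball B.c B.r

/-- A strategy for White: given the balls `B₁, …, B_{i+1}` chosen by Black so far,
produce White's next ball. -/
abbrev Strategy (𝔽 : Type) [Field 𝔽] (m n : ℕ) : Type :=
  (i : ℕ) → (Fin (i + 1) → FBall 𝔽 m n) → FBall 𝔽 m n

/-- White's move at stage `i` when following strategy `str` against Black's balls `B`. -/
def wMove {m n : ℕ} (str : Strategy 𝔽 m n) (B : ℕ → FBall 𝔽 m n) (i : ℕ) : FBall 𝔽 m n :=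
  str i fun j => B j.1

/-- Black's move `B_{j+2}` is legal (for parameter `β`): it is a formal subset of
White's ball `W_{j+1}` and has radius `β · ρ(W_{j+1})`. -/
def BlackOk {m n : ℕ} (β : ℝ) (str : Strategy 𝔽 m n) (B : ℕ → FBall 𝔽 m n) (j : ℕ) : Prop :=
  (B (j + 1)).ssub (wMove str B j) ∧ (B (j + 1)).r = β * (wMove str B j).r

/-- White's move `W_{i+1}` is legal (for parameter `α`): it is a formal subset of
Black's ball `B_{i+1}` and has radius `α · ρ(B_{i+1})`. -/
def WhiteOk {m n : ℕ} (α : ℝ) (str : Strategy 𝔽 m n) (B : ℕ → FBall 𝔽 m n) (i : ℕ) : Prop :=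
  (wMove str B i).ssub (B i) ∧ (wMove str B i).r = α * (B i).r

/-- `str` is a winning strategy for White in the `(α,β;S)`-game: against any
sequence of Black balls, White's moves are legal as long as Black has played
legally so far, and if the whole play is legal then the intersection of the
chosen balls is contained in `S`. -/
def WinningStrategy {m n : ℕ} (α β : ℝ) (S : Set (Mat 𝔽 m n)) (str : Strategy 𝔽 m n) : Prop :=
  ∀ B : ℕ → FBall 𝔽 m n, 0 ≤ (B 0).r →
    (∀ i, (∀ j < i, BlackOk β str B j) → WhiteOk α str B i) ∧
    ((∀ j, BlackOk β str B j) → (⋂ i, (B i).toSet) ⊆ S)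

/-- `S` is `(α,β)`-winning. -/
def IsWinningAB {m n : ℕ} (α β : ℝ) (S : Set (Mat 𝔽 m n)) : Prop :=
  ∃ str : Strategy 𝔽 m n, WinningStrategy α β S str

/-- `S` is `α`-winning. -/
def IsWinningA {m n : ℕ} (α : ℝ) (S : Set (Mat 𝔽 m n)) : Prop :=
  ∀ β : ℝ, 0 < β → β < 1 → IsWinningAB α β S

/-- The winning dimension of `S` (a supremum of a set of reals, which is `0` by
convention when the set is empty). -/
def windim {m n : ℕ} (S : Set (Mat 𝔽 m n)) : ℝ :=
  sSup {α : ℝ | 0 < α ∧ α < 1 ∧ IsWinningA α S}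

/-! ### The matrices `Ā`, `Ā^*` and the quantities `M_v`, `D_v`, `∇D_v` -/

/-- `Ā = [[A, I_m], [I_n, 0]]`. Rows are indexed by `Fin m ⊕ Fin n`
(coordinates `q_1, …, q_{m+n}`), columns by `Fin n ⊕ Fin m`. -/
def Abar {m n : ℕ} (A : Mat 𝔽 m n) : Matrix (Fin m ⊕ Fin n) (Fin n ⊕ Fin m) (L 𝔽) :=
  Matrix.fromBlocks A 1 1 0

/-- `Ā^* = [[Aᵀ, I_n], [I_m, 0]]`. Rows are indexed by `Fin n ⊕ Fin m`,
columns by `Fin m ⊕ Fin n`. -/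
def AbarStar {m n : ℕ} (A : Mat 𝔽 m n) : Matrix (Fin n ⊕ Fin m) (Fin m ⊕ Fin n) (L 𝔽) :=
  Matrix.fromBlocks A.transpose 1 1 0

/-- The standard bilinear form `x·y = Σ_i x_i y_i` on `ℒ^ι`. -/
def dotL {ι : Type*} [Fintype ι] (x y : ι → L 𝔽) : L 𝔽 := ∑ i, x i * y i

/-- Strictly increasing `v`-tuples `1 ≤ i_1 < ⋯ < i_v ≤ m`. -/
def IncTuple (v m : ℕ) : Type := {f : Fin v → Fin m // StrictMono f}

/-- The vector `M_v(A) ∈ ℒ^(C(m,v)²)` of the determinants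
`det (y_{i_r} · C_{j_s}(Ā^*))_{1 ≤ r,s ≤ v}` over all strictly increasing index
tuples.  (For `v = 0` every coordinate is an empty determinant, i.e. `1`.) -/
def MvVec {m n : ℕ} (y : Fin m → (Fin n ⊕ Fin m → L 𝔽)) (v : ℕ) (A : Mat 𝔽 m n) :
    IncTuple v m × IncTuple v m → L 𝔽 := fun p =>
  Matrix.det (Matrix.of fun r s : Fin v =>
    dotL (y (p.1.1 r)) fun t => AbarStar A t (Sum.inl (p.2.1 s)))

/-- `‖M_v(A)‖_∞`. -/
def MvNorm {m n : ℕ} (y : Fin m → (Fin n ⊕ Fin m → L 𝔽)) (v : ℕ) (A : Mat 𝔽 m n) : ℝ :=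
  vnorm (MvVec y v A)

/-- `M_v(K) = max_{A ∈ K} ‖M_v(A)‖_∞` for `K ⊆ ℒ^(mn)`. -/
def MvSet {m n : ℕ} (y : Fin m → (Fin n ⊕ Fin m → L 𝔽)) (v : ℕ) (K : Set (Mat 𝔽 m n)) : ℝ :=
  sSup {r : ℝ | ∃ A ∈ K, r = MvNorm y v A}

/-- `D_v(A) = det (y_h · C_l(Ā^*))_{1 ≤ h,l ≤ v}`. -/
def Dv {m n : ℕ} (y : Fin m → (Fin n ⊕ Fin m → L 𝔽)) (v : ℕ) (hv : v ≤ m)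
    (A : Mat 𝔽 m n) : L 𝔽 :=
  Matrix.det (Matrix.of fun h l : Fin v =>
    dotL (y (Fin.castLE hv h)) fun t => AbarStar A t (Sum.inl (Fin.castLE hv l)))

/-- The discrete gradient `∇D_v(A) ∈ ℒ^(mn)`, with coordinates
`D_v(A + E_{ij}) - D_v(A)`. -/
def gradDv {m n : ℕ} (y : Fin m → (Fin n ⊕ Fin m → L 𝔽)) (v : ℕ) (hv : v ≤ m)
    (A : Mat 𝔽 m n) : Fin m × Fin n → L 𝔽 := fun p =>
  Dv y v hv (A + Matrix.single p.1 p.2 1) - Dv y v hv A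

/-- `y_1, …, y_m ∈ ℒ^(m+n)` form an orthonormal system: `y_h · y_{h'} = δ_{h h'}`
and `‖t_1 y_1 + ⋯ + t_m y_m‖_∞ = max_h ‖t_h‖`. -/
def OrthoSystem {m n : ℕ} (y : Fin m → (Fin n ⊕ Fin m → L 𝔽)) : Prop :=
  (∀ h h', dotL (y h) (y h') = if h = h' then 1 else 0) ∧
  (∀ t : Fin m → L 𝔽, vnorm (fun r => ∑ h, t h * y h r) = ⨆ h, lnorm (t h))

/-! ### Distance functions, parallelepipeds and successive minima -/

/-- The `j`-th successive minimum of a distance function `F` on `ℒ^N`: the infimum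
of all `λ > 0` such that `{F < λ}` contains `j` linearly independent points of
`𝔽[X]^N`. -/
def succMin {N : ℕ} (F : (Fin N → L 𝔽) → ℝ) (j : ℕ) : ℝ :=
  sInf {lam : ℝ | 0 < lam ∧ ∃ v : Fin j → (Fin N → L 𝔽),
    (∀ r, ∀ i, IsPoly (v r i)) ∧ LinearIndependent (L 𝔽) v ∧ ∀ r, F (v r) < lam}

/-- The distance function `F_A(x) = max_j c_j⁻¹ ‖Σ_i x_i a_{ij}‖`. -/
def FA {N : ℕ} (A : Matrix (Fin N) (Fin N) (L 𝔽)) (c : Fin N → ℝ)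
    (x : Fin N → L 𝔽) : ℝ :=
  ⨆ j, (c j)⁻¹ * lnorm (∑ i, x i * A i j)

/-- The parallelepiped `P_A(λ) = {x ∈ ℒ^N : F_A(x) < λ}`. -/
def PA {N : ℕ} (A : Matrix (Fin N) (Fin N) (L 𝔽)) (c : Fin N → ℝ) (lam : ℝ) :
    Set (Fin N → L 𝔽) := {x | FA A c x < lam}

/-- The polar distance function `F_A^*(y) = sup_{x ≠ 0} ‖x·y‖ / F_A(x)`. -/
def FAstar {N : ℕ} (A : Matrix (Fin N) (Fin N) (L 𝔽)) (c : Fin N → ℝ)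
    (y : Fin N → L 𝔽) : ℝ :=
  ⨆ x : {x : Fin N → L 𝔽 // x ≠ 0}, lnorm (dotL x.1 y) / FA A c x.1

/-! ### Haar measure, characterized by translation invariance and normalization -/

/-- The Borel σ-algebra on `ℒ^N`, generated by the balls. -/
def vecSigma (𝔽 : Type) [Field 𝔽] [Fintype 𝔽] (N : ℕ) : MeasurableSpace (Fin N → L 𝔽) :=
  MeasurableSpace.generateFrom {s | ∃ c ρ, (0 : ℝ) < ρ ∧ s = vball c ρ}

/-- `μ` is the Haar measure on `ℒ^N`: translation invariant and normalized so that
the unit ball `I^N` has measure `1` (these properties determine it uniquely). -/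
def IsHaarVec {N : ℕ} (μ : @Measure (Fin N → L 𝔽) (vecSigma 𝔽 N)) : Prop :=
  (∀ (v : Fin N → L 𝔽) (s : Set (Fin N → L 𝔽)), μ ((fun x => x + v) ⁻¹' s) = μ s) ∧
  μ {x | ∀ i, lnorm (x i) < 1} = 1

/-- The Borel σ-algebra on `ℒ^(mn)`, generated by the balls. -/
def matSigma (𝔽 : Type) [Field 𝔽] [Fintype 𝔽] (m n : ℕ) : MeasurableSpace (Mat 𝔽 m n) :=
  MeasurableSpace.generateFrom {s | ∃ c ρ, (0 : ℝ) < ρ ∧ s = mball c ρ}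

/-- `μ` is the Haar measure on `ℒ^(mn)`: translation invariant and normalized so
that the unit ball `I^(mn)` has measure `1`. -/
def IsHaarMat {m n : ℕ} (μ : @Measure (Mat 𝔽 m n) (matSigma 𝔽 m n)) : Prop :=
  (∀ (v : Mat 𝔽 m n) (s : Set (Mat 𝔽 m n)), μ ((fun x => x + v) ⁻¹' s) = μ s) ∧
  μ {A | ∀ i j, lnorm (A i j) < 1} = 1

/-! ### The constants of Section 3 -/

/-- `τ = m/(m+n)`. -/
def tau (m n : ℕ) : ℝ := m / (m + n)

/-- `δ = R^(-m(m+n)²)`. -/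
def del (R : ℝ) (m n : ℕ) : ℝ := R ^ (-((m : ℝ) * ((m : ℝ) + n) ^ 2))

/-- `δ* = R^(-n(m+n)²)`. -/
def delStar (R : ℝ) (m n : ℕ) : ℝ := R ^ (-((n : ℝ) * ((m : ℝ) + n) ^ 2))

/-!
Each coordinate of `M_{w+1}` is a determinant whose rows depend affinely on the rows of `A`.
Replacing the rows of `A'` by those of `A` one at a time and expanding along the changed row gives
the mean value inequality `‖M_{w+1}(A) - M_{w+1}(A')‖ ≤ ‖A - A'‖ · M_w(B'')` on `B''`, because the
intermediate matrices stay in the ball.  The values of `‖·‖` are powers of `k`, so the inclusion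
`B'' ⊆ B` gives only `ρ(B'') ≤ k ρ₀`, but for the same reason a perturbation of size less than
`k ‖M_{v-1}(A')‖` has size at most `‖M_{v-1}(A')‖`.  Hence `‖M_{v-1}‖` is constant on `B'`.
-/

section Determinant

variable {ι κ R : Type*}

/-- The rows of `P` before `i` followed by the rows of `Q` from `i` on: the intermediate matrices
when `Q` is turned into `P` row by row. -/
def rowSplice [LinearOrder ι] (P Q : Matrix ι κ R) (i : ι) : Matrix ι κ R :=
  Matrix.of fun a => if a < i then P a else Q a

lemma rowSplice_submatrix {ι' κ' : Type*} [LinearOrder ι] [LinearOrder ι'] (P Q : Matrix ι κ R)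
    {p : ι' → ι} (hp : StrictMono p) (q : κ' → κ) (i : ι') :
    rowSplice (P.submatrix p q) (Q.submatrix p q) i = (rowSplice P Q (p i)).submatrix p q := by
  ext a b
  simp only [rowSplice, Matrix.of_apply, Matrix.submatrix_apply, hp.lt_iff_lt]
  split_ifs <;> rfl

lemma det_sub_det_eq_sum [Fintype ι] [LinearOrder ι] [CommRing R] (P Q : Matrix ι ι R) :
    P.det - Q.det = ∑ i, ((rowSplice P Q i).updateRow i (P i - Q i)).det := by
  have hQ : Matrix.det (Finset.univ.piecewise Q P) = Q.det :=
    congrArg Matrix.det (Finset.piecewise_univ Q P)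
  have telescope := Matrix.detRowAlternating.toMultilinearMap.map_sub_map_piecewise P Q Finset.univ
  rw [← hQ]
  refine telescope.trans (Finset.sum_congr rfl fun i _ => congrArg Matrix.det ?_)
  ext a b
  rcases eq_or_ne a i with rfl | hai
  · simp
  · simp [rowSplice, Matrix.updateRow_ne hai, hai.symm]

variable {S : Type*} [CommRing R] [CommRing S] [LinearOrder S] {f : AbsoluteValue R S}

lemma abv_sum_le (hf : IsNonarchimedean f) {s : Finset ι} {g : ι → R} {C : S} (hC : 0 ≤ C)
    (h : ∀ i ∈ s, f (g i) ≤ C) : f (∑ i ∈ s, g i) ≤ C :=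
  Finset.sum_induction g (f · ≤ C) (fun a b ha hb => (hf a b).trans (max_le ha hb))
    (by simpa only [map_zero] using hC) h

variable [IsStrictOrderedRing S] [IsDomain R]

lemma abv_det_le_of_row (hf : IsNonarchimedean f) {w : ℕ}
    {P : Matrix (Fin (w + 1)) (Fin (w + 1)) R} (i : Fin (w + 1)) {s K : S}
    (hrow : ∀ j, f (P i j) ≤ s)
    (hminor : ∀ j : Fin (w + 1), f (P.submatrix i.succAbove j.succAbove).det ≤ K) :
    f P.det ≤ s * K := by
  have hs : 0 ≤ s := (f.nonneg _).trans (hrow 0)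
  have hK : 0 ≤ K := (f.nonneg _).trans (hminor 0)
  rw [Matrix.det_succ_row P i]
  refine abv_sum_le hf (mul_nonneg hs hK) fun j _ => ?_
  have hsign : f ((-1) ^ (i + j : ℕ)) = 1 := by rw [map_pow, f.map_neg, map_one, one_pow]
  rw [map_mul, map_mul, hsign, one_mul]
  exact mul_le_mul (hrow j) (hminor j) (f.nonneg _) hs

lemma abv_det_sub_det_le (hf : IsNonarchimedean f) {w : ℕ}
    {P Q : Matrix (Fin (w + 1)) (Fin (w + 1)) R} {s K : S} (hentry : ∀ i j, f (P i j - Q i j) ≤ s)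
    (hminor : ∀ i j : Fin (w + 1),
      f ((rowSplice P Q i).submatrix i.succAbove j.succAbove).det ≤ K) :
    f (P.det - Q.det) ≤ s * K := by
  have hs : 0 ≤ s := (f.nonneg _).trans (hentry 0 0)
  have hK : 0 ≤ K := (f.nonneg _).trans (hminor 0 0)
  rw [det_sub_det_eq_sum]
  refine abv_sum_le hf (mul_nonneg hs hK) fun i _ =>
    abv_det_le_of_row hf i (fun j => ?_) fun j => ?_
  · simpa only [Matrix.updateRow_self, Pi.sub_apply] using hentry i j
  · simpa only [Matrix.submatrix_updateRow_succAbove] using hminor i j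

end Determinant

section AbsoluteValue

lemma one_lt_card_real : (1 : ℝ) < Fintype.card 𝔽 := mod_cast Fintype.one_lt_card (α := 𝔽)

lemma card_real_pos : (0 : ℝ) < Fintype.card 𝔽 := zero_lt_one.trans one_lt_card_real

lemma lnorm_zero : lnorm (0 : L 𝔽) = 0 := if_pos rfl

lemma lnorm_of_ne_zero {x : L 𝔽} (hx : x ≠ 0) : lnorm x = (Fintype.card 𝔽 : ℝ) ^ (-x.order) :=
  if_neg hx

lemma lnorm_pos {x : L 𝔽} (hx : x ≠ 0) : 0 < lnorm x :=
  lnorm_of_ne_zero hx ▸ zpow_pos card_real_pos _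

lemma lnorm_nonneg (x : L 𝔽) : 0 ≤ lnorm x := by
  rcases eq_or_ne x 0 with rfl | hx
  · exact lnorm_zero.ge
  · exact (lnorm_pos hx).le

lemma lnorm_mul (x y : L 𝔽) : lnorm (x * y) = lnorm x * lnorm y := by
  rcases eq_or_ne x 0 with rfl | hx
  · rw [zero_mul, lnorm_zero, zero_mul]
  rcases eq_or_ne y 0 with rfl | hy
  · rw [mul_zero, lnorm_zero, mul_zero]
  rw [lnorm_of_ne_zero hx, lnorm_of_ne_zero hy, lnorm_of_ne_zero (mul_ne_zero hx hy),
    HahnSeries.order_mul hx hy, neg_add, zpow_add₀ card_real_pos.ne']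

lemma isNonarchimedean_lnorm : IsNonarchimedean (lnorm : L 𝔽 → ℝ) := by
  intro x y
  rcases eq_or_ne x 0 with rfl | hx
  · rw [zero_add]; exact le_max_right _ _
  rcases eq_or_ne y 0 with rfl | hy
  · rw [add_zero]; exact le_max_left _ _
  rcases eq_or_ne (x + y) 0 with hxy | hxy
  · rw [hxy, lnorm_zero]; exact le_max_of_le_left (lnorm_nonneg x)
  rw [lnorm_of_ne_zero hx, lnorm_of_ne_zero hy, lnorm_of_ne_zero hxy, le_max_iff]
  simp only [zpow_le_zpow_iff_right₀ one_lt_card_real, neg_le_neg_iff]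
  exact min_le_iff.1 (HahnSeries.min_order_le_order_add hxy)

/-- `lnorm` bundled as an absolute value, which makes the general theory of absolute values
available for it. -/
def lnormAbv : AbsoluteValue (L 𝔽) ℝ where
  toFun := lnorm
  map_mul' := lnorm_mul
  nonneg' := lnorm_nonneg
  eq_zero' _ := ⟨fun h => by_contra fun hx => (lnorm_pos hx).ne' h, fun h => h ▸ lnorm_zero⟩
  add_le' _ _ := isNonarchimedean_lnorm.add_le lnorm_nonneg

lemma lnorm_sub_comm (x y : L 𝔽) : lnorm (x - y) = lnorm (y - x) := lnormAbv.map_sub x y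

lemma lnorm_sub_le_max (x y z : L 𝔽) :
    lnorm (x - z) ≤ max (lnorm (x - y)) (lnorm (y - z)) := by
  simpa only [sub_add_sub_cancel] using isNonarchimedean_lnorm (x - y) (y - z)

lemma lnorm_le_of_lt_card_mul {x e : L 𝔽} (h : lnorm x < Fintype.card 𝔽 * lnorm e) :
    lnorm x ≤ lnorm e := by
  rcases eq_or_ne x 0 with rfl | hx
  · exact lnorm_zero.trans_le (lnorm_nonneg e)
  rcases eq_or_ne e 0 with rfl | he
  · rw [lnorm_zero, mul_zero] at h
    exact absurd h (lnorm_nonneg x).not_gt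
  rw [lnorm_of_ne_zero hx, lnorm_of_ne_zero he] at h ⊢
  rw [← zpow_one_add₀ card_real_pos.ne', zpow_lt_zpow_iff_right₀ one_lt_card_real] at h
  exact zpow_le_zpow_right₀ one_lt_card_real.le (by omega)

lemma exists_lnorm_le_and_lt_card_mul {ρ : ℝ} (hρ : 0 < ρ) :
    ∃ x : L 𝔽, lnorm x ≤ ρ ∧ ρ < Fintype.card 𝔽 * lnorm x := by
  obtain ⟨j, hle, hlt⟩ := exists_mem_Ico_zpow hρ (one_lt_card_real (𝔽 := 𝔽))
  have hx : lnorm (HahnSeries.single (-j) 1 : L 𝔽) = (Fintype.card 𝔽 : ℝ) ^ j := by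
    rw [lnorm_of_ne_zero (by simp), HahnSeries.order_single one_ne_zero, neg_neg]
  refine ⟨HahnSeries.single (-j) 1, hx.trans_le hle, ?_⟩
  rwa [hx, ← zpow_one_add₀ card_real_pos.ne', add_comm]

end AbsoluteValue

section SupNorm

variable {ι : Type*}

lemma vnorm_nonneg (x : ι → L 𝔽) : 0 ≤ vnorm x := Real.iSup_nonneg fun i => lnorm_nonneg (x i)

lemma vnorm_le {x : ι → L 𝔽} {C : ℝ} (hC : 0 ≤ C) (h : ∀ i, lnorm (x i) ≤ C) : vnorm x ≤ C :=
  Real.iSup_le h hC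

variable [Finite ι]

lemma lnorm_le_vnorm (x : ι → L 𝔽) (i : ι) : lnorm (x i) ≤ vnorm x :=
  le_ciSup (f := fun i => lnorm (x i)) (Set.finite_range _).bddAbove i

lemma vnorm_le_max_vnorm_sub (x z : ι → L 𝔽) : vnorm x ≤ max (vnorm (x - z)) (vnorm z) := by
  refine vnorm_le (le_max_of_le_right (vnorm_nonneg z)) fun i => ?_
  calc lnorm (x i) = lnorm ((x - z) i + z i) := by rw [Pi.sub_apply, sub_add_cancel]
    _ ≤ max (lnorm ((x - z) i)) (lnorm (z i)) := isNonarchimedean_lnorm _ _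
    _ ≤ max (vnorm (x - z)) (vnorm z) := max_le_max (lnorm_le_vnorm _ i) (lnorm_le_vnorm z i)

lemma vnorm_le_of_lt_card_mul {x e : ι → L 𝔽} (h : vnorm x < Fintype.card 𝔽 * vnorm e) :
    vnorm x ≤ vnorm e := by
  rcases isEmpty_or_nonempty ι with hι | hι
  · rw [Subsingleton.elim x e]
  obtain ⟨j, hj⟩ : ∃ j, lnorm (e j) = vnorm e := exists_eq_ciSup_of_finite
  refine vnorm_le (vnorm_nonneg e) fun i => ?_
  rw [← hj] at h ⊢
  exact lnorm_le_of_lt_card_mul ((lnorm_le_vnorm x i).trans_lt h)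

lemma vnorm_le_of_vnorm_sub_lt {x z : ι → L 𝔽}
    (h : vnorm (x - z) < Fintype.card 𝔽 * vnorm z) : vnorm x ≤ vnorm z :=
  (vnorm_le_max_vnorm_sub x z).trans (max_le (vnorm_le_of_lt_card_mul h) le_rfl)

end SupNorm

section Ball

variable {m n : ℕ} {c c₀ A A' : Mat 𝔽 m n} {ρ ρ₀ : ℝ}

lemma radius_nonneg_of_mem_mball (hA : A ∈ mball c ρ) : 0 ≤ ρ :=
  (vnorm_nonneg fun p : Fin m × Fin n => (A - c) p.1 p.2).trans hA

lemma mem_mball_iff (hρ : 0 ≤ ρ) : A ∈ mball c ρ ↔ ∀ i j, lnorm (A i j - c i j) ≤ ρ :=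
  ⟨fun hA i j => (lnorm_le_vnorm (fun p : Fin m × Fin n => (A - c) p.1 p.2) (i, j)).trans hA,
    fun h => vnorm_le hρ fun p => h p.1 p.2⟩

lemma lnorm_sub_center_le (hA : A ∈ mball c ρ) (i : Fin m) (j : Fin n) :
    lnorm (A i j - c i j) ≤ ρ :=
  (mem_mball_iff (radius_nonneg_of_mem_mball hA)).1 hA i j

lemma lnorm_sub_le_radius (hA : A ∈ mball c ρ) (hA' : A' ∈ mball c ρ) (i : Fin m) (j : Fin n) :
    lnorm (A i j - A' i j) ≤ ρ :=
  (lnorm_sub_le_max _ (c i j) _).trans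
    (max_le (lnorm_sub_center_le hA i j)
      ((lnorm_sub_comm _ _).trans_le (lnorm_sub_center_le hA' i j)))

lemma center_mem_mball (hρ : 0 ≤ ρ) : c ∈ mball c ρ :=
  (mem_mball_iff hρ).2 fun i j => by rwa [sub_self, lnorm_zero]

lemma rowSplice_mem_mball (hA : A ∈ mball c ρ) (hA' : A' ∈ mball c ρ) (i : Fin m) :
    rowSplice A A' i ∈ mball c ρ := by
  refine (mem_mball_iff (radius_nonneg_of_mem_mball hA)).2 fun a b => ?_
  simp only [rowSplice, Matrix.of_apply]
  split_ifs
  · exact lnorm_sub_center_le hA a b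
  · exact lnorm_sub_center_le hA' a b

lemma radius_le_card_mul_radius (hm : 0 < m) (hn : 0 < n) (hρ : 0 ≤ ρ)
    (hsub : mball c ρ ⊆ mball c₀ ρ₀) : ρ ≤ Fintype.card 𝔽 * ρ₀ := by
  have hc := hsub (center_mem_mball hρ)
  rcases hρ.eq_or_lt with rfl | hρpos
  · exact mul_nonneg (card_real_pos (𝔽 := 𝔽)).le (radius_nonneg_of_mem_mball hc)
  obtain ⟨x, hxle, hxlt⟩ := exists_lnorm_le_and_lt_card_mul (𝔽 := 𝔽) hρpos
  have hcx : c + Matrix.of (fun _ _ => x) ∈ mball c₀ ρ₀ :=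
    hsub ((mem_mball_iff hρ).2 fun i j => by simpa using hxle)
  have hx : lnorm x ≤ ρ₀ := by simpa using lnorm_sub_le_radius hcx hc ⟨0, hm⟩ ⟨0, hn⟩
  exact hxlt.le.trans (mul_le_mul_of_nonneg_left hx card_real_pos.le)

end Ball

section Minors

instance (w m : ℕ) : Finite (IncTuple w m) :=
  inferInstanceAs (Finite {f : Fin w → Fin m // StrictMono f})

/-- The increasing tuple obtained by deleting the `i`-th index. -/
def IncTuple.removeNth {w m : ℕ} (i : Fin (w + 1)) (p : IncTuple (w + 1) m) : IncTuple w m :=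
  ⟨p.1 ∘ i.succAbove, p.2.comp (Fin.strictMono_succAbove i)⟩

variable {m n : ℕ} {y : Fin m → (Fin n ⊕ Fin m → L 𝔽)} {A A' c : Mat 𝔽 m n} {ρ : ℝ}

/-- The matrix of the products `y_i · C_j(Ā^*)`, with `j` as row index: its `j`-th row then depends
only on the `j`-th row of `A`. -/
def pairing (y : Fin m → (Fin n ⊕ Fin m → L 𝔽)) (A : Mat 𝔽 m n) :
    Matrix (Fin m) (Fin m) (L 𝔽) :=
  Matrix.of fun j i => dotL (y i) fun t => AbarStar A t (Sum.inl j)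

omit [Fintype 𝔽] in
lemma pairing_apply (y : Fin m → (Fin n ⊕ Fin m → L 𝔽)) (A : Mat 𝔽 m n) (j i : Fin m) :
    pairing y A j i = ∑ t, y i (Sum.inl t) * A j t + y i (Sum.inr j) := by
  simp [pairing, dotL, AbarStar, Matrix.one_apply]

omit [Fintype 𝔽] in
lemma pairing_rowSplice (y : Fin m → (Fin n ⊕ Fin m → L 𝔽)) (A A' : Mat 𝔽 m n) (j : Fin m) :
    pairing y (rowSplice A A' j) = rowSplice (pairing y A) (pairing y A') j := by
  ext a b
  simp only [pairing_apply, rowSplice, Matrix.of_apply]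
  split_ifs <;> rw [pairing_apply]

omit [Fintype 𝔽] in
lemma MvVec_eq_det (y : Fin m → (Fin n ⊕ Fin m → L 𝔽)) (w : ℕ) (A : Mat 𝔽 m n)
    (p : IncTuple w m × IncTuple w m) :
    MvVec y w A p = ((pairing y A).submatrix p.2.1 p.1.1).det :=
  (Matrix.det_transpose _).symm

lemma MvNorm_zero_eq (y : Fin m → (Fin n ⊕ Fin m → L 𝔽)) (A A' : Mat 𝔽 m n) :
    MvNorm y 0 A = MvNorm y 0 A' :=
  congrArg vnorm (funext fun _ => Matrix.det_fin_zero.trans Matrix.det_fin_zero.symm)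

lemma MvNorm_nonneg (y : Fin m → (Fin n ⊕ Fin m → L 𝔽)) (w : ℕ) (A : Mat 𝔽 m n) :
    0 ≤ MvNorm y w A :=
  vnorm_nonneg _

lemma MvSet_nonneg (y : Fin m → (Fin n ⊕ Fin m → L 𝔽)) (w : ℕ) (K : Set (Mat 𝔽 m n)) :
    0 ≤ MvSet y w K := by
  refine Real.sSup_nonneg ?_
  rintro _ ⟨A, _, rfl⟩
  exact MvNorm_nonneg y w A

lemma OrthoSystem.lnorm_le_one (hy : OrthoSystem y) (h : Fin m) (t : Fin n ⊕ Fin m) :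
    lnorm (y h t) ≤ 1 := by
  have hcomb : (fun r => ∑ h', (Pi.single h 1 : Fin m → L 𝔽) h' * y h' r) = y h := by
    funext r
    simp [Pi.single_apply]
  have hnorm : vnorm (y h) = ⨆ h', lnorm ((Pi.single h 1 : Fin m → L 𝔽) h') :=
    hcomb ▸ hy.2 (Pi.single h 1)
  refine (lnorm_le_vnorm (y h) t).trans (hnorm.trans_le (Real.iSup_le (fun i => ?_) zero_le_one))
  rcases eq_or_ne i h with rfl | hi
  · rw [Pi.single_eq_same]
    exact (map_one lnormAbv).le
  · rw [Pi.single_eq_of_ne hi, lnorm_zero]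
    exact zero_le_one

lemma lnorm_pairing_sub_le (hy : ∀ h t, lnorm (y h (Sum.inl t)) ≤ 1) {s : ℝ} (hs : 0 ≤ s)
    {j : Fin m} (h : ∀ t, lnorm (A j t - A' j t) ≤ s) (i : Fin m) :
    lnorm (pairing y A j i - pairing y A' j i) ≤ s := by
  rw [pairing_apply, pairing_apply, add_sub_add_right_eq_sub, ← Finset.sum_sub_distrib]
  refine abv_sum_le (f := lnormAbv) isNonarchimedean_lnorm hs fun t _ => ?_
  calc lnorm (y i (Sum.inl t) * A j t - y i (Sum.inl t) * A' j t)
      = lnorm (y i (Sum.inl t)) * lnorm (A j t - A' j t) := by rw [← mul_sub, lnorm_mul]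
    _ ≤ 1 * s := mul_le_mul (hy i t) (h t) (lnorm_nonneg _) zero_le_one
    _ = s := one_mul s

lemma vnorm_MvVec_sub_le (hy : ∀ h t, lnorm (y h (Sum.inl t)) ≤ 1) {w : ℕ} {s K : ℝ}
    (hA : A ∈ mball c ρ) (hA' : A' ∈ mball c ρ) (hs : 0 ≤ s)
    (hAA' : ∀ i t, lnorm (A i t - A' i t) ≤ s) (hK : ∀ H ∈ mball c ρ, MvNorm y w H ≤ K) :
    vnorm (MvVec y (w + 1) A - MvVec y (w + 1) A') ≤ s * K := by
  have hK0 : 0 ≤ K := (MvNorm_nonneg y w A).trans (hK A hA)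
  refine vnorm_le (mul_nonneg hs hK0) fun p => ?_
  rw [Pi.sub_apply, MvVec_eq_det, MvVec_eq_det]
  refine abv_det_sub_det_le (f := lnormAbv) isNonarchimedean_lnorm
    (fun i j => lnorm_pairing_sub_le hy hs (hAA' _) _) fun i j => ?_
  rw [rowSplice_submatrix _ _ p.2.2, ← pairing_rowSplice, Matrix.submatrix_submatrix]
  have hminor := lnorm_le_vnorm (MvVec y w (rowSplice A A' (p.2.1 i)))
    (p.1.removeNth j, p.2.removeNth i)
  rw [MvVec_eq_det] at hminor
  exact hminor.trans (hK _ (rowSplice_mem_mball hA hA' _))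

lemma exists_forall_mem_mball_MvNorm_le (hy : ∀ h t, lnorm (y h (Sum.inl t)) ≤ 1) (w : ℕ)
    (c : Mat 𝔽 m n) (ρ : ℝ) : ∃ K, ∀ A ∈ mball c ρ, MvNorm y w A ≤ K := by
  induction w with
  | zero => exact ⟨MvNorm y 0 c, fun A _ => (MvNorm_zero_eq y A c).le⟩
  | succ w ih =>
    obtain ⟨K, hK⟩ := ih
    refine ⟨max (ρ * K) (MvNorm y (w + 1) c), fun A hA => ?_⟩
    have hρ := radius_nonneg_of_mem_mball hA
    have hsub := vnorm_MvVec_sub_le hy hA (center_mem_mball hρ) hρ (lnorm_sub_center_le hA) hK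
    exact (vnorm_le_max_vnorm_sub _ _).trans (max_le_max hsub le_rfl)

lemma MvNorm_le_MvSet (hy : ∀ h t, lnorm (y h (Sum.inl t)) ≤ 1) (w : ℕ) (hA : A ∈ mball c ρ) :
    MvNorm y w A ≤ MvSet y w (mball c ρ) := by
  obtain ⟨K, hK⟩ := exists_forall_mem_mball_MvNorm_le hy w c ρ
  refine le_csSup ⟨K, ?_⟩ ⟨A, hA, rfl⟩
  rintro _ ⟨H, hH, rfl⟩
  exact hK H hH

lemma MvSet_le {w : ℕ} {K : Set (Mat 𝔽 m n)} {C : ℝ} (hC : 0 ≤ C)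
    (h : ∀ A ∈ K, MvNorm y w A ≤ C) : MvSet y w K ≤ C := by
  refine Real.sSup_le ?_ hC
  rintro _ ⟨A, hA, rfl⟩
  exact h A hA

lemma MvNorm_succ_eq_MvSet (hy : ∀ h t, lnorm (y h (Sum.inl t)) ≤ 1) {w : ℕ}
    {c' c'' : Mat 𝔽 m n} {ρ' ρ'' : ℝ} (hsub : mball c' ρ' ⊆ mball c'' ρ'') (hA' : A' ∈ mball c' ρ')
    (hbig : ρ' * MvSet y w (mball c'' ρ'') < Fintype.card 𝔽 * MvNorm y (w + 1) A') :
    MvNorm y (w + 1) A' = MvSet y (w + 1) (mball c' ρ') := by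
  refine (MvNorm_le_MvSet hy _ hA').antisymm (MvSet_le (MvNorm_nonneg y _ A') fun A hA => ?_)
  refine vnorm_le_of_vnorm_sub_lt (lt_of_le_of_lt ?_ hbig)
  exact vnorm_MvVec_sub_le hy (hsub hA) (hsub hA') (radius_nonneg_of_mem_mball hA)
    (lnorm_sub_le_radius hA hA') fun H hH => MvNorm_le_MvSet hy w hH

end Minors

-- Here `w = v - 1`; at `w = 0` truncation turns `M_{-1}` into `M_0`, and both are `1`.
theorem Mv_stays_large_general {m n : ℕ} (hm : 0 < m) (hn : 0 < n)
    {y : Fin m → (Fin n ⊕ Fin m → L 𝔽)} (hy : ∀ h t, lnorm (y h (Sum.inl t)) ≤ 1) (w : ℕ)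
    {c₀ c'' c' A' : Mat 𝔽 m n} {ρ₀ ρ'' ρ' μ : ℝ} (hμ : 0 ≤ μ)
    (hsub'' : mball c'' ρ'' ⊆ mball c₀ ρ₀) (hsub' : mball c' ρ' ⊆ mball c'' ρ'')
    (hρ' : ρ' ≤ μ * ρ'') (hA' : A' ∈ mball c' ρ')
    (hbig : ρ₀ * μ * MvSet y (w - 1) (mball c'' ρ'') < MvNorm y w A') :
    0 < MvNorm y w A' ∧ MvNorm y w A' = MvSet y w (mball c' ρ') := by
  have hA'' := hsub' hA'
  have hρ₀ : 0 ≤ ρ₀ := radius_nonneg_of_mem_mball (hsub'' hA'')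
  have hpos : 0 < MvNorm y w A' :=
    (mul_nonneg (mul_nonneg hρ₀ hμ) (MvSet_nonneg y _ _)).trans_lt hbig
  refine ⟨hpos, ?_⟩
  cases w with
  | zero =>
    exact (MvNorm_le_MvSet hy 0 hA').antisymm
      (MvSet_le hpos.le fun A _ => (MvNorm_zero_eq y A A').le)
  | succ w =>
    have hρ'' : ρ'' ≤ Fintype.card 𝔽 * ρ₀ :=
      radius_le_card_mul_radius hm hn (radius_nonneg_of_mem_mball hA'') hsub''
    refine MvNorm_succ_eq_MvSet hy hsub' hA' ?_
    calc ρ' * MvSet y w (mball c'' ρ'')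
        ≤ μ * (Fintype.card 𝔽 * ρ₀) * MvSet y w (mball c'' ρ'') :=
          mul_le_mul_of_nonneg_right (hρ'.trans (mul_le_mul_of_nonneg_left hρ'' hμ))
            (MvSet_nonneg y w _)
      _ = Fintype.card 𝔽 * (ρ₀ * μ * MvSet y w (mball c'' ρ'')) := by ring
      _ < Fintype.card 𝔽 * MvNorm y (w + 1) A' := mul_lt_mul_of_pos_left hbig card_real_pos

/-- **Theorem (Statement 8).** (Corollary `finite1`.)  If `‖M_{v-1}‖` is large on a
ball `B''`, then on any ball `B' ⊆ B''` of radius `< (1/2) μ_{v-1} ρ(B'')` one has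
`‖M_{v-1}(A')‖_∞ > (1/2) M_{v-1}(B')` for every `A' ∈ B'`. -/
theorem Mv_stays_large (𝔽 : Type) [Field 𝔽] [Fintype 𝔽] (m n : ℕ)
    (hm : 0 < m) (hn : 0 < n)
    (y : Fin m → (Fin n ⊕ Fin m → L 𝔽)) (hy : OrthoSystem y)
    (v : ℕ) (hv1 : 1 ≤ v) (hv : v ≤ m)
    (c₀ : Mat 𝔽 m n) (ρ₀ : ℝ) (μprev : ℝ) (hμprev : 0 < μprev)
    (c'' : Mat 𝔽 m n) (ρ'' : ℝ) (hsub'' : mball c'' ρ'' ⊆ mball c₀ ρ₀)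
    (hbig : ∀ A ∈ mball c'' ρ'',
      ρ₀ * μprev * MvSet y (v - 2) (mball c'' ρ'') < MvNorm y (v - 1) A)
    (c' : Mat 𝔽 m n) (ρ' : ℝ) (hρ' : ρ' < (1 / 2) * μprev * ρ'')
    (hsub' : mball c' ρ' ⊆ mball c'' ρ'')
    (A' : Mat 𝔽 m n) (hA' : A' ∈ mball c' ρ') :
    (1 / 2) * MvSet y (v - 1) (mball c' ρ') < MvNorm y (v - 1) A' := by
  have hρ'' : 0 ≤ μprev * ρ'' :=
    mul_nonneg hμprev.le (radius_nonneg_of_mem_mball (hsub' hA'))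
  obtain ⟨hpos, hconst⟩ := Mv_stays_large_general hm hn (fun h t => hy.lnorm_le_one h (Sum.inl t))
    (v - 1) hμprev.le hsub'' hsub' (by linarith) hA' (hbig A' (hsub' hA'))
  linarith

end FSBad
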